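/- Fix ξ ∈ ℝ³ with ξ ≠ 0 and let W², W³ be orthonormal vectors in ℝ³ orthogonal to ξ. Define functions h₀(ξ) = (√2|ξ|²/(√(3+5|ξ|²)√(1+|ξ|²)))χ₀ - (√(3+3|ξ|²)/√(3+5|ξ|²))χ₄, h_{±1}(ξ) = (√(3/2)|ξ|/√(3+5|ξ|²))χ₀ ± √(1/2)(v·ξ/|ξ|)χ₀ + (|ξ|/√(3+5|ξ|²))χ₄, and h_k(ξ) = (v·Wᵏ)χ₀ for k = 2,3. Then (h_j(ξ), h_k(ξ))_ξ = δ_{jk} for all j, k ∈ {-1,0,1,2,3}, where (f,g)_ξ = (f,g) + |ξ|^{-2}(P_d f, P_d g). -/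

import Mathlib

open MeasureTheory RealInnerProductSpace

/-- The normalized global Maxwellian on ℝ³. -/
noncomputable def Mw (v : EuclideanSpace ℝ (Fin 3)) : ℝ :=
  (2 * Real.pi) ^ (-(3 : ℝ) / 2) * Real.exp (-‖v‖ ^ 2 / 2)

noncomputable def chi0 (v : EuclideanSpace ℝ (Fin 3)) : ℝ := Real.sqrt (Mw v)

noncomputable def chi4 (v : EuclideanSpace ℝ (Fin 3)) : ℝ :=
  (‖v‖ ^ 2 - 3) * Real.sqrt (Mw v) / Real.sqrt 6

/-- The rank-one projection P_d g = (g,√M)√M. -/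
noncomputable def Pd (f : EuclideanSpace ℝ (Fin 3) → ℝ) :
    EuclideanSpace ℝ (Fin 3) → ℝ :=
  fun v => (∫ w : EuclideanSpace ℝ (Fin 3), f w * chi0 w) * chi0 v

/-- The weighted inner product (f,g)_ξ = (f,g) + |ξ|⁻²(P_d f, P_d g). -/
noncomputable def innerXi (ξ : EuclideanSpace ℝ (Fin 3))
    (f g : EuclideanSpace ℝ (Fin 3) → ℝ) : ℝ :=
  (∫ v : EuclideanSpace ℝ (Fin 3), f v * g v) +
    (‖ξ‖ ^ 2)⁻¹ * ∫ v : EuclideanSpace ℝ (Fin 3), Pd f v * Pd g v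

/-- The eigenfunctions h₋₁, h₀, h₁, h₂, h₃ of the macroscopic operator D(ξ),
    indexed in this order by `Fin 5`. -/
noncomputable def hfun (ξ W2 W3 : EuclideanSpace ℝ (Fin 3)) :
    Fin 5 → EuclideanSpace ℝ (Fin 3) → ℝ :=
  ![fun v => Real.sqrt (3 / 2) * ‖ξ‖ / Real.sqrt (3 + 5 * ‖ξ‖ ^ 2) * chi0 v -
      Real.sqrt (1 / 2) * (⟪v, ξ⟫ / ‖ξ‖) * chi0 v +
      ‖ξ‖ / Real.sqrt (3 + 5 * ‖ξ‖ ^ 2) * chi4 v,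
    fun v => Real.sqrt 2 * ‖ξ‖ ^ 2 /
        (Real.sqrt (3 + 5 * ‖ξ‖ ^ 2) * Real.sqrt (1 + ‖ξ‖ ^ 2)) * chi0 v -
      Real.sqrt (3 + 3 * ‖ξ‖ ^ 2) / Real.sqrt (3 + 5 * ‖ξ‖ ^ 2) * chi4 v,
    fun v => Real.sqrt (3 / 2) * ‖ξ‖ / Real.sqrt (3 + 5 * ‖ξ‖ ^ 2) * chi0 v +
      Real.sqrt (1 / 2) * (⟪v, ξ⟫ / ‖ξ‖) * chi0 v +
      ‖ξ‖ / Real.sqrt (3 + 5 * ‖ξ‖ ^ 2) * chi4 v,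
    fun v => ⟪v, W2⟫ * chi0 v,
    fun v => ⟪v, W3⟫ * chi0 v]

/-!
The measure `M dv` is the standard Gaussian of `ℝ³`, so the orthonormality in `L²(dv)` of the
products of `√M` with `1`, `v · w` (`|w| = 1`) and `(|v|² - 3) / √6` amounts to
`E[(v · w)(v · w')] = w · w'` and `Var |v|² = 6`, the mixed terms being odd or centred. In the
resulting density, momentum and temperature coordinates `(a, w, c)`, the projection `P_d` keeps only
`a`, so passing to `(·, ·)_ξ` replaces `a a'` by `(1 + |ξ|⁻²) a a'`. After rescaling the density by
`√(1 + |ξ|⁻²)`, the (density, temperature) parts of `h_{±1}` and `h₀` are `(cos θ, sin θ) / √2` and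
`(sin θ, -cos θ)`; the momentum parts `± ξ / (√2 |ξ|)` of `h_{±1}` supply the missing `1 / 2` on
the diagonal and cancel it off the diagonal.
-/

section StandardGaussian

open ProbabilityTheory Module
open scoped NNReal

theorem integrable_gaussianReal_iff {μ : ℝ} {v : ℝ≥0} (hv : v ≠ 0) {f : ℝ → ℝ} :
    Integrable f (gaussianReal μ v) ↔ Integrable fun x => gaussianPDFReal μ v x * f x := by
  rw [gaussianReal_of_var_ne_zero μ hv, integrable_withDensity_iff_integrable_smul'
    (measurable_gaussianPDF μ v) (.of_forall fun _ => gaussianPDF_lt_top)]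
  simp only [toReal_gaussianPDF, smul_eq_mul]

theorem hasDerivAt_gaussianPDFReal (μ : ℝ) (v : ℝ≥0) (x : ℝ) :
    HasDerivAt (gaussianPDFReal μ v) (-((x - μ) / v * gaussianPDFReal μ v x)) x := by
  have hexponent : HasDerivAt (fun y => -(y - μ) ^ 2 / (2 * v)) (-((x - μ) / v)) x := by
    refine ((((hasDerivAt_id x).sub_const μ).pow 2).neg.div_const (2 * (v : ℝ))).congr_deriv ?_
    simp only [id, Nat.cast_ofNat]
    ring
  refine (hexponent.exp.const_mul (√(2 * Real.pi * v))⁻¹).congr_deriv ?_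
  rw [gaussianPDFReal]
  ring

/-- **Stein's lemma.** -/
theorem integral_sub_mul_gaussianReal {μ : ℝ} {v : ℝ≥0} {f f' : ℝ → ℝ}
    (hff' : ∀ x, HasDerivAt f (f' x) x) (hf : Integrable f (gaussianReal μ v))
    (hf' : Integrable f' (gaussianReal μ v))
    (hxf : Integrable (fun x => (x - μ) * f x) (gaussianReal μ v)) :
    ∫ x, (x - μ) * f x ∂gaussianReal μ v = v * ∫ x, f' x ∂gaussianReal μ v := by
  obtain rfl | hv := eq_or_ne v 0
  · simp
  have hv' : (v : ℝ) ≠ 0 := by exact_mod_cast hv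
  rw [integrable_gaussianReal_iff hv] at hf hf' hxf
  have hderiv (x : ℝ) : HasDerivAt (fun y => gaussianPDFReal μ v y * f y)
      (gaussianPDFReal μ v x * f' x - (v : ℝ)⁻¹ * (gaussianPDFReal μ v x * ((x - μ) * f x))) x :=
    ((hasDerivAt_gaussianPDFReal μ v x).mul (hff' x)).congr_deriv (by ring)
  have hzero := integral_eq_zero_of_hasDerivAt_of_integrable hderiv
    (hf'.sub (hxf.const_mul _)) hf
  rw [integral_sub hf' (hxf.const_mul _), integral_const_mul, sub_eq_zero] at hzero
  simp only [integral_gaussianReal_eq_integral_smul hv, smul_eq_mul]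
  rw [hzero, mul_inv_cancel_left₀ hv']

theorem integrable_pow_gaussianReal (μ : ℝ) (v : ℝ≥0) (n : ℕ) :
    Integrable (fun x => x ^ n) (gaussianReal μ v) := by
  refine (integrable_norm_iff (by fun_prop)).1 ?_
  simpa only [norm_pow, id] using
    (memLp_id_gaussianReal' (μ := μ) (v := v) n (by simp)).integrable_norm_pow'

theorem integral_pow_add_two_gaussianReal (v : ℝ≥0) (n : ℕ) :
    ∫ x, x ^ (n + 2) ∂gaussianReal 0 v = (n + 1) * v * ∫ x, x ^ n ∂gaussianReal 0 v := by
  have hstein := integral_sub_mul_gaussianReal (μ := 0) (v := v)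
    (fun x => hasDerivAt_pow (n + 1) x) (integrable_pow_gaussianReal 0 v _)
    ((integrable_pow_gaussianReal 0 v _).const_mul _)
    (by simpa only [sub_zero, ← pow_succ'] using integrable_pow_gaussianReal 0 v (n + 2))
  simp only [sub_zero, ← pow_succ', integral_const_mul] at hstein
  rw [hstein]
  push_cast [Nat.add_sub_cancel]
  ring

theorem memLp_sq_gaussianReal (μ : ℝ) (v : ℝ≥0) :
    MemLp (fun x => x ^ 2) 2 (gaussianReal μ v) := by
  rw [memLp_two_iff_integrable_sq (by fun_prop)]
  simpa only [← pow_mul] using integrable_pow_gaussianReal μ v 4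

theorem variance_sq_gaussianReal (v : ℝ≥0) : Var[fun x => x ^ 2; gaussianReal 0 v] = 2 * v ^ 2 := by
  have htwo : ∫ x, x ^ 2 ∂gaussianReal 0 v = v := by
    simpa using integral_pow_add_two_gaussianReal v 0
  have hfour : ∫ x, x ^ 4 ∂gaussianReal 0 v = 3 * v ^ 2 := by
    rw [integral_pow_add_two_gaussianReal v 2, htwo]
    push_cast
    ring
  rw [variance_eq_sub (memLp_sq_gaussianReal 0 v)]
  simp only [Pi.pow_apply, ← pow_mul, Nat.reduceMul, htwo, hfour]
  ring

theorem integral_eq_zero_of_odd {G : Type*} [AddGroup G] [MeasurableSpace G] [MeasurableNeg G]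
    {μ : Measure G} [μ.IsNegInvariant] {f : G → ℝ} (hf : f.Odd) : ∫ x, f x ∂μ = 0 := by
  have hneg := integral_neg_eq_self f μ
  simp only [hf _, integral_neg] at hneg
  linarith

theorem memLp_norm_sq_of_isGaussian {F : Type*} [NormedAddCommGroup F] [NormedSpace ℝ F]
    [CompleteSpace F] [SecondCountableTopology F] [MeasurableSpace F] [BorelSpace F]
    (μ : Measure F) [IsGaussian μ] : MemLp (fun v => ‖v‖ ^ 2) 2 μ := by
  rw [memLp_two_iff_integrable_sq (by fun_prop)]
  simpa only [id, ← pow_mul] using (IsGaussian.memLp_id μ 4 (by simp)).integrable_norm_pow'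

variable {E : Type*} [NormedAddCommGroup E] [InnerProductSpace ℝ E]

/-- The density of `stdGaussian E` with respect to Lebesgue measure; it is the Maxwellian `M` when
`E = ℝ³`. -/
noncomputable def stdGaussianPDF (v : E) : ℝ :=
  (2 * Real.pi) ^ (-(finrank ℝ E : ℝ) / 2) * Real.exp (-‖v‖ ^ 2 / 2)

theorem stdGaussianPDF_nonneg (v : E) : 0 ≤ stdGaussianPDF v := by
  unfold stdGaussianPDF
  positivity

theorem measurable_stdGaussianPDF [MeasurableSpace E] [BorelSpace E] :
    Measurable (stdGaussianPDF : E → ℝ) := by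
  unfold stdGaussianPDF
  fun_prop

theorem ofReal_stdGaussianPDF_mul_cexp_inner (v t : E) :
    (stdGaussianPDF v : ℂ) * Complex.exp (⟪v, t⟫ * Complex.I) =
      (2 * Real.pi) ^ (-(finrank ℝ E : ℂ) / 2) *
        Complex.exp (-(1 / 2) * ‖v‖ ^ 2 + Complex.I * ⟪t, v⟫) := by
  rw [stdGaussianPDF, Complex.exp_add, real_inner_comm, Complex.ofReal_mul,
    Complex.ofReal_cpow (by positivity)]
  push_cast
  ring_nf

variable [FiniteDimensional ℝ E] [MeasurableSpace E] [BorelSpace E]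

theorem integrable_stdGaussianPDF : Integrable (stdGaussianPDF : E → ℝ) := by
  have hcexp := (GaussianFourier.integrable_cexp_neg_mul_sq_norm_add (V := E) (b := 1 / 2)
    (by norm_num) Complex.I 0).const_mul ((2 * Real.pi) ^ (-(finrank ℝ E : ℂ) / 2))
  simp only [← ofReal_stdGaussianPDF_mul_cexp_inner] at hcexp
  simpa using hcexp.re

theorem integral_stdGaussianPDF_mul_cexp_inner (t : E) :
    ∫ v, (stdGaussianPDF v : ℂ) * Complex.exp (⟪v, t⟫ * Complex.I) =
      Complex.exp (-‖t‖ ^ 2 / 2) := by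
  have hpi : (2 * Real.pi : ℂ) ≠ 0 := by simp [Real.pi_ne_zero]
  have hconst : (2 * Real.pi : ℂ) ^ (-(finrank ℝ E : ℂ) / 2) *
      (Real.pi / (1 / 2)) ^ (finrank ℝ E / 2 : ℂ) = 1 := by
    rw [show (Real.pi / (1 / 2) : ℂ) = 2 * Real.pi by ring, ← Complex.cpow_add _ _ hpi,
      neg_div, neg_add_cancel, Complex.cpow_zero]
  simp only [ofReal_stdGaussianPDF_mul_cexp_inner]
  rw [integral_const_mul, GaussianFourier.integral_cexp_neg_mul_sq_norm_add (by norm_num),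
    ← mul_assoc, hconst, one_mul, Complex.I_sq]
  ring_nf

variable (E) in
theorem stdGaussian_eq_withDensity :
    stdGaussian E = volume.withDensity fun v => ENNReal.ofReal (stdGaussianPDF v) := by
  have : IsFiniteMeasure (volume.withDensity fun v : E => ENNReal.ofReal (stdGaussianPDF v)) :=
    isFiniteMeasure_withDensity_ofReal integrable_stdGaussianPDF.2
  refine Measure.ext_of_charFun (funext fun t => ?_)
  rw [charFun_stdGaussian, charFun_apply, integral_withDensity_eq_integral_toReal_smul
    measurable_stdGaussianPDF.ennreal_ofReal (by simp)]
  simp only [ENNReal.toReal_ofReal (stdGaussianPDF_nonneg _), Complex.real_smul,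
    integral_stdGaussianPDF_mul_cexp_inner]

theorem integral_stdGaussian_eq_integral_mul (f : E → ℝ) :
    ∫ v, f v ∂stdGaussian E = ∫ v, stdGaussianPDF v * f v := by
  rw [stdGaussian_eq_withDensity, integral_withDensity_eq_integral_toReal_smul
    measurable_stdGaussianPDF.ennreal_ofReal (by simp)]
  simp only [ENNReal.toReal_ofReal (stdGaussianPDF_nonneg _), smul_eq_mul]

instance isNegInvariant_stdGaussian : (stdGaussian E).IsNegInvariant :=
  ⟨stdGaussian_map (LinearIsometryEquiv.neg ℝ)⟩

theorem memLp_inner_stdGaussian (w : E) : MemLp (fun v => ⟪v, w⟫) 2 (stdGaussian E) :=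
  IsGaussian.memLp_two_id.inner_const w

theorem integral_inner_mul_inner_stdGaussian (w w' : E) :
    ∫ v, ⟪v, w⟫ * ⟪v, w'⟫ ∂stdGaussian E = ⟪w, w'⟫ := by
  have hcov := covarianceBilin_apply (μ := stdGaussian E) IsGaussian.memLp_two_id w w'
  rw [covarianceBilin_stdGaussian, innerSL_apply_apply] at hcov
  simpa only [id, integral_id_stdGaussian, sub_zero, real_inner_comm] using hcov.symm

variable (E) in
theorem integral_norm_sq_stdGaussian : ∫ v, ‖v‖ ^ 2 ∂stdGaussian E = finrank ℝ E := by
  let b := stdOrthonormalBasis ℝ E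
  have hintegrable (i) : Integrable (fun v => ⟪v, b i⟫ * ⟪v, b i⟫) (stdGaussian E) :=
    (memLp_inner_stdGaussian (b i)).integrable_mul (memLp_inner_stdGaussian (b i))
  calc ∫ v, ‖v‖ ^ 2 ∂stdGaussian E = ∫ v, ∑ i, ⟪v, b i⟫ * ⟪v, b i⟫ ∂stdGaussian E := by
        simp only [← pow_two, b.sum_sq_inner_left]
    _ = ∑ i, ⟪b i, b i⟫ := by
        rw [integral_finsetSum _ fun i _ => hintegrable i]
        simp only [integral_inner_mul_inner_stdGaussian]
    _ = finrank ℝ E := by simp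

variable (E) in
theorem variance_norm_sq_stdGaussian :
    Var[fun v => ‖v‖ ^ 2; stdGaussian E] = 2 * finrank ℝ E := by
  let b := stdOrthonormalBasis ℝ E
  have hsum : (fun v : E => ‖v‖ ^ 2) ∘ (fun x => ∑ i, x i • b i) =
      ∑ i, fun x : Fin (finrank ℝ E) → ℝ => x i ^ 2 := by
    funext x
    simp only [Function.comp_apply, Finset.sum_apply]
    rw [← real_inner_self_eq_norm_sq, b.orthonormal.inner_sum]
    simp [pow_two]
  rw [stdGaussian_eq_map_pi_orthonormalBasis b,
    variance_map (by fun_prop) (Measurable.aemeasurable (by fun_prop)), hsum,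
    variance_sum_pi fun _ => memLp_sq_gaussianReal 0 1]
  simp [variance_sq_gaussianReal, mul_comm]

/-- The centred kinetic energy `(|v|² - d) / √(2d)` in dimension `d`, normalized to have unit
variance under the standard Gaussian; it satisfies `χ₄ = normalizedEnergy * χ₀` when `d = 3`. -/
noncomputable def normalizedEnergy (v : E) : ℝ := (‖v‖ ^ 2 - finrank ℝ E) / √(2 * finrank ℝ E)

theorem memLp_normalizedEnergy : MemLp normalizedEnergy 2 (stdGaussian E) := by
  simp only [funext normalizedEnergy.eq_1, div_eq_mul_inv]
  exact ((memLp_norm_sq_of_isGaussian _).sub (memLp_const _)).mul_const _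

theorem integral_normalizedEnergy : ∫ v, normalizedEnergy v ∂stdGaussian E = 0 := by
  simp only [normalizedEnergy]
  rw [integral_div, integral_sub
    ((memLp_norm_sq_of_isGaussian _).integrable one_le_two) (integrable_const _),
    integral_norm_sq_stdGaussian]
  simp

theorem variance_normalizedEnergy [Nontrivial E] : Var[normalizedEnergy; stdGaussian E] = 1 := by
  have hdim : (finrank ℝ E : ℝ) ≠ 0 := by exact_mod_cast finrank_pos.ne'
  simp only [funext normalizedEnergy.eq_1, div_eq_mul_inv]
  rw [variance_mul_const, variance_sub_const (by fun_prop), variance_norm_sq_stdGaussian, inv_pow,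
    Real.sq_sqrt (by positivity), mul_inv_cancel₀ (by positivity)]

theorem integral_inner_stdGaussian (w : E) : ∫ v, ⟪v, w⟫ ∂stdGaussian E = 0 :=
  integral_eq_zero_of_odd fun v => by simp

theorem covariance_inner_stdGaussian (w w' : E) :
    cov[fun v => ⟪v, w⟫, fun v => ⟪v, w'⟫; stdGaussian E] = ⟪w, w'⟫ := by
  simp only [covariance, integral_inner_stdGaussian, sub_zero, integral_inner_mul_inner_stdGaussian]

theorem covariance_inner_normalizedEnergy (w : E) :
    cov[fun v => ⟪v, w⟫, normalizedEnergy; stdGaussian E] = 0 := by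
  simp only [covariance, integral_inner_stdGaussian, integral_normalizedEnergy, sub_zero]
  exact integral_eq_zero_of_odd fun v => by simp [normalizedEnergy]

/-- The collision invariant `a + v · w + c (|v|² - d) / √(2d)` of the Boltzmann equation. -/
noncomputable def collisionInvariant (a : ℝ) (w : E) (c : ℝ) (v : E) : ℝ :=
  a + (⟪v, w⟫ + c * normalizedEnergy v)

theorem memLp_collisionInvariant (a : ℝ) (w : E) (c : ℝ) :
    MemLp (collisionInvariant a w c) 2 (stdGaussian E) :=
  (memLp_const a).add ((memLp_inner_stdGaussian w).add (memLp_normalizedEnergy.const_mul c))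

theorem integral_collisionInvariant (a : ℝ) (w : E) (c : ℝ) :
    ∫ v, collisionInvariant a w c v ∂stdGaussian E = a := by
  have hinner := (memLp_inner_stdGaussian w).integrable one_le_two
  have henergy := (memLp_normalizedEnergy (E := E)).integrable one_le_two |>.const_mul c
  simp only [collisionInvariant]
  rw [integral_add (integrable_const a) (hinner.fun_add henergy), integral_add hinner henergy,
    integral_const_mul, integral_inner_stdGaussian, integral_normalizedEnergy]
  simp

theorem covariance_collisionInvariant [Nontrivial E] (a a' : ℝ) (w w' : E) (c c' : ℝ) :
    cov[collisionInvariant a w c, collisionInvariant a' w' c'; stdGaussian E] =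
      ⟪w, w'⟫ + c * c' := by
  have hinner := memLp_inner_stdGaussian (E := E)
  have henergy (c : ℝ) : MemLp (fun v => c * normalizedEnergy v) 2 (stdGaussian E) :=
    memLp_normalizedEnergy.const_mul c
  have hsum (w : E) (c : ℝ) := (hinner w).add (henergy c)
  calc cov[collisionInvariant a w c, collisionInvariant a' w' c'; stdGaussian E]
      = cov[(fun v => ⟪v, w⟫) + fun v => c * normalizedEnergy v,
          (fun v => ⟪v, w'⟫) + fun v => c' * normalizedEnergy v; stdGaussian E] :=
        (covariance_const_add_left ((hsum w c).integrable one_le_two) a).trans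
          (covariance_const_add_right ((hsum w' c').integrable one_le_two) a')
    _ = ⟪w, w'⟫ + c * c' := by
        rw [covariance_add_left (hinner w) (henergy c) (hsum w' c'),
          covariance_add_right (hinner w) (hinner w') (henergy c'),
          covariance_add_right (henergy c) (hinner w') (henergy c'),
          covariance_const_mul_left, covariance_const_mul_left, covariance_const_mul_right,
          covariance_const_mul_right, covariance_comm normalizedEnergy,
          covariance_inner_normalizedEnergy, covariance_inner_normalizedEnergy,
          covariance_inner_stdGaussian, covariance_self memLp_normalizedEnergy.aemeasurable,
          variance_normalizedEnergy]
        ring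

theorem integral_collisionInvariant_mul [Nontrivial E] (a a' : ℝ) (w w' : E) (c c' : ℝ) :
    ∫ v, collisionInvariant a w c v * collisionInvariant a' w' c' v ∂stdGaussian E =
      a * a' + ⟪w, w'⟫ + c * c' := by
  have hcov := covariance_eq_sub (memLp_collisionInvariant a w c)
    (memLp_collisionInvariant a' w' c')
  rw [covariance_collisionInvariant, integral_collisionInvariant, integral_collisionInvariant]
    at hcov
  simp only [Pi.mul_apply] at hcov
  linarith

end StandardGaussian

theorem Mw_eq_stdGaussianPDF : Mw = stdGaussianPDF := by
  funext v
  simp [Mw, stdGaussianPDF]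

theorem chi0_mul_self (v : EuclideanSpace ℝ (Fin 3)) : chi0 v * chi0 v = stdGaussianPDF v := by
  rw [← Mw_eq_stdGaussianPDF]
  exact Real.mul_self_sqrt (by unfold Mw; positivity)

theorem integral_mul_chi0_mul_mul_chi0 (f g : EuclideanSpace ℝ (Fin 3) → ℝ) :
    ∫ v, f v * chi0 v * (g v * chi0 v) =
      ∫ v, f v * g v ∂ProbabilityTheory.stdGaussian (EuclideanSpace ℝ (Fin 3)) := by
  rw [integral_stdGaussian_eq_integral_mul]
  congr with v
  rw [← chi0_mul_self]
  ring

/-- The macroscopic (fluid) distribution with density `a`, momentum `w` and temperature `c`, that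
is, `a χ₀ + (v · w) χ₀ + c χ₄`. -/
noncomputable def macroscopic (a : ℝ) (w : EuclideanSpace ℝ (Fin 3)) (c : ℝ)
    (v : EuclideanSpace ℝ (Fin 3)) : ℝ :=
  collisionInvariant a w c v * chi0 v

theorem macroscopic_apply (a : ℝ) (w : EuclideanSpace ℝ (Fin 3)) (c : ℝ)
    (v : EuclideanSpace ℝ (Fin 3)) :
    macroscopic a w c v = a * chi0 v + ⟪v, w⟫ * chi0 v + c * chi4 v := by
  have hdim : √(2 * (3 : ℝ)) = √6 := by norm_num
  simp only [macroscopic, collisionInvariant, normalizedEnergy, finrank_euclideanSpace_fin,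
    Nat.cast_ofNat, hdim, chi4, ← chi0.eq_1]
  ring

theorem macroscopic_one_zero_zero : macroscopic 1 0 0 = chi0 := by
  funext v
  simp [macroscopic_apply]

theorem integral_macroscopic_mul (a a' : ℝ) (w w' : EuclideanSpace ℝ (Fin 3)) (c c' : ℝ) :
    ∫ v, macroscopic a w c v * macroscopic a' w' c' v = a * a' + ⟪w, w'⟫ + c * c' := by
  simp only [macroscopic]
  rw [integral_mul_chi0_mul_mul_chi0, integral_collisionInvariant_mul]

theorem Pd_macroscopic (a : ℝ) (w : EuclideanSpace ℝ (Fin 3)) (c : ℝ) :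
    Pd (macroscopic a w c) = macroscopic a 0 0 := by
  funext v
  rw [Pd, ← macroscopic_one_zero_zero, integral_macroscopic_mul]
  simp [macroscopic_apply]

theorem innerXi_macroscopic (ξ : EuclideanSpace ℝ (Fin 3)) (a a' : ℝ)
    (w w' : EuclideanSpace ℝ (Fin 3)) (c c' : ℝ) :
    innerXi ξ (macroscopic a w c) (macroscopic a' w' c') =
      (1 + (‖ξ‖ ^ 2)⁻¹) * (a * a') + c * c' + ⟪w, w'⟫ := by
  rw [innerXi, Pd_macroscopic, Pd_macroscopic, integral_macroscopic_mul, integral_macroscopic_mul,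
    inner_zero_left]
  ring

/-- The `χ₀`-coordinates of `h₋₁, h₀, h₁, h₂, h₃` as functions of `s = |ξ|`. -/
noncomputable def hfunDensity (s : ℝ) : Fin 5 → ℝ :=
  ![√(3 / 2) * s / √(3 + 5 * s ^ 2), √2 * s ^ 2 / (√(3 + 5 * s ^ 2) * √(1 + s ^ 2)),
    √(3 / 2) * s / √(3 + 5 * s ^ 2), 0, 0]

/-- The `χ₄`-coordinates of `h₋₁, h₀, h₁, h₂, h₃` as functions of `s = |ξ|`. -/
noncomputable def hfunTemperature (s : ℝ) : Fin 5 → ℝ :=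
  ![s / √(3 + 5 * s ^ 2), -(√(3 + 3 * s ^ 2) / √(3 + 5 * s ^ 2)), s / √(3 + 5 * s ^ 2), 0, 0]

/-- The vectors `w` for which `(v · w) χ₀` is the momentum part of `h₋₁, h₀, h₁, h₂, h₃`. -/
noncomputable def hfunMomentum {E : Type*} [NormedAddCommGroup E] [InnerProductSpace ℝ E]
    (ξ W2 W3 : E) : Fin 5 → E :=
  ![-((√(1 / 2) / ‖ξ‖) • ξ), 0, (√(1 / 2) / ‖ξ‖) • ξ, W2, W3]

theorem hfun_eq_macroscopic (ξ W2 W3 : EuclideanSpace ℝ (Fin 3)) (j : Fin 5) :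
    hfun ξ W2 W3 j =
      macroscopic (hfunDensity ‖ξ‖ j) (hfunMomentum ξ W2 W3 j) (hfunTemperature ‖ξ‖ j) := by
  funext v
  rw [macroscopic_apply]
  fin_cases j <;>
    simp [hfun, hfunDensity, hfunMomentum, hfunTemperature, real_inner_smul_right,
      mul_comm_div, sub_eq_add_neg]

/-- The cosine of the angle `θ` for which, once the density is rescaled by `√(1 + |ξ|⁻²)`, the
(density, temperature) parts of `h_{±1}` and `h₀` are `(cos θ, sin θ) / √2` and
`(sin θ, -cos θ)`, where `s = |ξ|`. -/
noncomputable def mixingCos (s : ℝ) : ℝ := √3 * √(1 + s ^ 2) / √(3 + 5 * s ^ 2)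

/-- The sine of the angle whose cosine is `mixingCos s`. -/
noncomputable def mixingSin (s : ℝ) : ℝ := √2 * s / √(3 + 5 * s ^ 2)

theorem mixingCos_sq_add_mixingSin_sq (s : ℝ) : mixingCos s ^ 2 + mixingSin s ^ 2 = 1 := by
  have hpos : 0 < 3 + 5 * s ^ 2 := by positivity
  simp only [mixingCos, mixingSin, div_pow, mul_pow]
  rw [Real.sq_sqrt hpos.le, Real.sq_sqrt (by positivity), Real.sq_sqrt (by positivity),
    Real.sq_sqrt (by positivity)]
  field_simp
  ring

theorem hfunDensity_eq_mixing (s : ℝ) (j : Fin 5) :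
    hfunDensity s j =
      s / √(1 + s ^ 2) * ![(√2)⁻¹ * mixingCos s, mixingSin s, (√2)⁻¹ * mixingCos s, 0, 0] j := by
  have hq : √(1 + s ^ 2) ≠ 0 := by positivity
  have hsound : √(3 / 2) * s / √(3 + 5 * s ^ 2) = s / √(1 + s ^ 2) * ((√2)⁻¹ * mixingCos s) := by
    rw [mixingCos, Real.sqrt_div (by norm_num)]
    field_simp
  have hthermal : √2 * s ^ 2 / (√(3 + 5 * s ^ 2) * √(1 + s ^ 2)) =
      s / √(1 + s ^ 2) * mixingSin s := by
    rw [mixingSin]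
    ring
  rw [hfunDensity, hsound, hthermal]
  fin_cases j <;> simp

theorem hfunTemperature_eq_mixing (s : ℝ) (j : Fin 5) :
    hfunTemperature s j =
      ![(√2)⁻¹ * mixingSin s, -mixingCos s, (√2)⁻¹ * mixingSin s, 0, 0] j := by
  have hsound : s / √(3 + 5 * s ^ 2) = (√2)⁻¹ * mixingSin s := by
    rw [mixingSin]
    field_simp
  have hthermal : √(3 + 3 * s ^ 2) / √(3 + 5 * s ^ 2) = mixingCos s := by
    rw [mixingCos, ← Real.sqrt_mul (by norm_num), mul_add, mul_one]
  rw [hfunTemperature, hsound, hthermal]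

theorem hfunDensity_mul_add_hfunTemperature_mul {s : ℝ} (hs : s ≠ 0) (j k : Fin 5) :
    (1 + (s ^ 2)⁻¹) * (hfunDensity s j * hfunDensity s k) +
        hfunTemperature s j * hfunTemperature s k =
      !![1 / 2, 0, 1 / 2, 0, 0;
         0,     1, 0,     0, 0;
         1 / 2, 0, 1 / 2, 0, 0;
         0,     0, 0,     0, 0;
         0,     0, 0,     0, 0] j k := by
  have hweight (x y : ℝ) :
      (1 + (s ^ 2)⁻¹) * (s / √(1 + s ^ 2) * x * (s / √(1 + s ^ 2) * y)) = x * y := by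
    have hq : √(1 + s ^ 2) ^ 2 = 1 + s ^ 2 := Real.sq_sqrt (by positivity)
    have hq0 : √(1 + s ^ 2) ≠ 0 := by positivity
    field_simp
    rw [hq]
    ring
  have hthermal := mixingCos_sq_add_mixingSin_sq s
  have hsound : (√2)⁻¹ * mixingCos s * ((√2)⁻¹ * mixingCos s) +
      (√2)⁻¹ * mixingSin s * ((√2)⁻¹ * mixingSin s) = 2⁻¹ := by
    have htwo : (√2)⁻¹ ^ 2 = (2 : ℝ)⁻¹ := by rw [inv_pow, Real.sq_sqrt (by norm_num)]
    linear_combination (mixingCos s ^ 2 + mixingSin s ^ 2) * htwo + 2⁻¹ * hthermal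
  simp only [hfunDensity_eq_mixing, hfunTemperature_eq_mixing, hweight]
  fin_cases j <;> fin_cases k <;> simp <;> linarith

theorem inner_hfunMomentum {E : Type*} [NormedAddCommGroup E] [InnerProductSpace ℝ E]
    {ξ W2 W3 : E} (hξ : ξ ≠ 0) (hW2 : ‖W2‖ = 1) (hW3 : ‖W3‖ = 1) (hW23 : ⟪W2, W3⟫ = 0)
    (hW2ξ : ⟪W2, ξ⟫ = 0) (hW3ξ : ⟪W3, ξ⟫ = 0) (j k : Fin 5) :
    ⟪hfunMomentum ξ W2 W3 j, hfunMomentum ξ W2 W3 k⟫ =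
      !![1 / 2,  0, -1 / 2, 0, 0;
         0,      0, 0,      0, 0;
         -1 / 2, 0, 1 / 2,  0, 0;
         0,      0, 0,      1, 0;
         0,      0, 0,      0, 1] j k := by
  obtain ⟨e, he⟩ : ∃ e, e = (√(1 / 2) / ‖ξ‖) • ξ := ⟨_, rfl⟩
  have hee : ‖e‖ ^ 2 = 1 / 2 := by
    rw [he, norm_smul, norm_div, norm_norm, div_mul_cancel₀ _ (norm_ne_zero_iff.2 hξ),
      Real.norm_eq_abs, sq_abs, Real.sq_sqrt (by norm_num)]
  have hW2e : ⟪W2, e⟫ = 0 := by rw [he, real_inner_smul_right, hW2ξ, mul_zero]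
  have hW3e : ⟪W3, e⟫ = 0 := by rw [he, real_inner_smul_right, hW3ξ, mul_zero]
  have heW2 : ⟪e, W2⟫ = 0 := inner_eq_zero_symm.1 hW2e
  have heW3 : ⟪e, W3⟫ = 0 := inner_eq_zero_symm.1 hW3e
  have hW32 : ⟪W3, W2⟫ = 0 := inner_eq_zero_symm.1 hW23
  rw [hfunMomentum, ← he]
  fin_cases j <;> fin_cases k <;>
    simp [hee, hW2, hW3, hW23, hW32, hW2e, hW3e, heW2, heW3, neg_div]

/-- Orthonormality (h_j(ξ), h_k(ξ))_ξ = δ_{jk} of the eigenfunctions. -/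
theorem hfun_orthonormal (ξ W2 W3 : EuclideanSpace ℝ (Fin 3)) (hξ : ξ ≠ 0)
    (hW2 : ‖W2‖ = 1) (hW3 : ‖W3‖ = 1) (hW23 : ⟪W2, W3⟫ = 0)
    (hW2ξ : ⟪W2, ξ⟫ = 0) (hW3ξ : ⟪W3, ξ⟫ = 0) :
    ∀ j k : Fin 5, innerXi ξ (hfun ξ W2 W3 j) (hfun ξ W2 W3 k) =
      if j = k then 1 else 0 := by
  intro j k
  rw [hfun_eq_macroscopic, hfun_eq_macroscopic, innerXi_macroscopic,
    hfunDensity_mul_add_hfunTemperature_mul (norm_ne_zero_iff.2 hξ),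
    inner_hfunMomentum hξ hW2 hW3 hW23 hW2ξ hW3ξ]
  fin_cases j <;> fin_cases k <;> norm_num
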